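/- Let X be a strictly stable random variable with parameters (ν, θ, τ) and write V̄ = log|X| − τ. Then E[V̄³] = 2ζ(3)(ν^{3/2} − 1), E[V̄⁴] = π⁴((1 − θ⁴)/8 + (ν² − 1)/15) + 3·DV², and E[V̄⁵] = 20ζ(3)(ν^{3/2} − 1)·DV + 24ζ(5)(ν^{5/2} − 1). -/

import Mathlib

open MeasureTheory ProbabilityTheory

/-- The real value of the Riemann zeta function at a real argument. -/
noncomputable def zetaR (s : ℝ) : ℝ := (riemannZeta (s : ℂ)).re

/-- A real random variable `X` is strictly stable with parameters `(ν, θ, τ)` if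
`ν ≥ 1/4`, `|θ| ≤ min 1 (2√ν − 1)`, `P(X = 0) = 0`, `log |X|` has finite absolute
moments of every order, and the characteristic function of `X` is
`E[exp(i k X)] = exp(−exp(ν^{−1/2}(log|k| + τ − i(π/2)θ sign k) + C(ν^{−1/2} − 1)))`
for all real `k ≠ 0`, where `C` is the Euler–Mascheroni constant. -/
def IsStrictlyStable {Ω : Type*} [MeasureSpace Ω] (X : Ω → ℝ) (ν θ τ : ℝ) : Prop :=
  Measurable X ∧ (1/4 : ℝ) ≤ ν ∧ |θ| ≤ min 1 (2 * Real.sqrt ν - 1) ∧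
  (ℙ : Measure Ω) {ω | X ω = 0} = 0 ∧
  (∀ p : ℕ, Integrable (fun ω => (abs (Real.log (abs (X ω)))) ^ p)) ∧
  ∀ k : ℝ, k ≠ 0 →
    (∫ ω, Complex.exp (Complex.I * (k : ℂ) * (X ω : ℂ))) =
      Complex.exp (-Complex.exp
        (((ν ^ (-(1/2) : ℝ) : ℝ) : ℂ) *
            (((Real.log |k| : ℝ) : ℂ) + (τ : ℂ) -
              Complex.I * ((Real.pi / 2 : ℝ) : ℂ) * (θ : ℂ) * ((Real.sign k : ℝ) : ℂ)) +
          ((Real.eulerMascheroniConstant : ℝ) : ℂ) * (((ν ^ (-(1/2) : ℝ) : ℝ) : ℂ) - 1)))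

/-!
Integrating the characteristic function of `X` against `k ^ (s - 1)` on `(0, ∞)` turns
`E[exp (i k X)]` into `Γ(s) E[(-i X) ^ (-s)]` and, by the Gamma integral, turns the stretched
exponential `exp (-(r k ^ α))` into an explicit Gamma factor. Real parts give `E[|X| ^ (-s)]` for
`0 < s < 1`, so for `-1 < t < 0` the moment generating function of `V = log |X| - τ` at `t` is
`exp (K t)`, where, with `β = √ν` and `γ` the Euler–Mascheroni constant,

  `K t = log cos (π θ t / 2) - log cos (π t / 2) + log Γ(1 - β t) - log Γ(1 - t) + γ (1 - β) t`.

`K` is analytic at `0` and all moments of `V` are finite, so they are the left limits at `0` of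
the derivatives of the moment generating function, that is, the derivatives of `exp ∘ K` at `0`.
Since `K 0 = K' 0 = 0`, with `κₙ` the `n`-th derivative of `K` at `0`,

  `E[V³] = κ₃`, `E[V⁴] = κ₄ + 3 κ₂²`, `E[V⁵] = κ₅ + 10 κ₂ κ₃`,

and `log Γ(1 - x) = γ x + ∑_{k ≥ 2} ζ(k) x ^ k / k` supplies the zeta values.
-/

section Calculus

open Filter Topology Finset

variable {K : ℝ → ℝ} {x : ℝ}

theorem iteratedDeriv_succ_exp_comp {n : ℕ} (hK : ContDiffAt ℝ (n + 1) K x) :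
    iteratedDeriv (n + 1) (fun t => Real.exp (K t)) x =
      ∑ i ∈ range (n + 1), (n.choose i : ℝ) * iteratedDeriv (i + 1) K x *
        iteratedDeriv (n - i) (fun t => Real.exp (K t)) x := by
  have hderiv : deriv (fun t => Real.exp (K t)) =ᶠ[𝓝 x] fun t => deriv K t * Real.exp (K t) := by
    filter_upwards [hK.eventually (by simp)] with t ht
    rw [deriv_exp (ht.differentiableAt (by simp)), mul_comm]
  rw [iteratedDeriv_succ', hderiv.iteratedDeriv_eq,
    iteratedDeriv_fun_mul (hK.derivWithin le_rfl) (hK.of_le le_self_add).exp]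
  simp only [iteratedDeriv_succ']

theorem iteratedDeriv_one_exp_comp (hK : ContDiffAt ℝ 1 K x) (h1 : iteratedDeriv 1 K x = 0) :
    iteratedDeriv 1 (fun t => Real.exp (K t)) x = 0 := by
  rw [iteratedDeriv_succ_exp_comp (n := 0) hK]
  simp [h1]

theorem iteratedDeriv_two_exp_comp (hK : ContDiffAt ℝ 2 K x) (h0 : K x = 0)
    (h1 : iteratedDeriv 1 K x = 0) :
    iteratedDeriv 2 (fun t => Real.exp (K t)) x = iteratedDeriv 2 K x := by
  rw [iteratedDeriv_succ_exp_comp (n := 1) hK]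
  simp [sum_range_succ, h0, h1]

theorem iteratedDeriv_three_exp_comp (hK : ContDiffAt ℝ 3 K x) (h0 : K x = 0)
    (h1 : iteratedDeriv 1 K x = 0) :
    iteratedDeriv 3 (fun t => Real.exp (K t)) x = iteratedDeriv 3 K x := by
  rw [iteratedDeriv_succ_exp_comp (n := 2) hK]
  simp [sum_range_succ, h0, h1, iteratedDeriv_one_exp_comp (hK.of_le (by norm_num)) h1]

theorem iteratedDeriv_four_exp_comp (hK : ContDiffAt ℝ 4 K x) (h0 : K x = 0)
    (h1 : iteratedDeriv 1 K x = 0) :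
    iteratedDeriv 4 (fun t => Real.exp (K t)) x =
      iteratedDeriv 4 K x + 3 * iteratedDeriv 2 K x ^ 2 := by
  rw [iteratedDeriv_succ_exp_comp (n := 3) hK]
  simp only [Nat.reduceAdd, sum_range_succ, range_one, sum_singleton, Nat.choose, Nat.cast_one,
    zero_add, h1, mul_zero, tsub_zero, zero_mul, Nat.cast_ofNat, Nat.add_one_sub_one,
    Nat.reduceSub, add_zero, one_mul, tsub_self, iteratedDeriv_zero, h0, Real.exp_zero, mul_one,
    iteratedDeriv_one_exp_comp (hK.of_le (by norm_num)) h1,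
    iteratedDeriv_two_exp_comp (hK.of_le (by norm_num)) h0 h1]
  ring

theorem iteratedDeriv_five_exp_comp (hK : ContDiffAt ℝ 5 K x) (h0 : K x = 0)
    (h1 : iteratedDeriv 1 K x = 0) :
    iteratedDeriv 5 (fun t => Real.exp (K t)) x =
      iteratedDeriv 5 K x + 10 * iteratedDeriv 2 K x * iteratedDeriv 3 K x := by
  rw [iteratedDeriv_succ_exp_comp (n := 4) hK]
  simp only [Nat.reduceAdd, sum_range_succ, range_one, sum_singleton, Nat.choose, Nat.cast_one,
    zero_add, h1, mul_zero, tsub_zero, zero_mul, Nat.cast_ofNat, Nat.add_one_sub_one,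
    Nat.reduceSub, add_zero, one_mul, tsub_self, iteratedDeriv_zero, h0, Real.exp_zero, mul_one,
    iteratedDeriv_one_exp_comp (hK.of_le (by norm_num)) h1,
    iteratedDeriv_two_exp_comp (hK.of_le (by norm_num)) h0 h1,
    iteratedDeriv_three_exp_comp (hK.of_le (by norm_num)) h0 h1]
  ring

theorem iteratedDeriv_comp_mul_left {f : ℝ → ℝ} {n : ℕ} {x : ℝ} (c : ℝ)
    (hf : ContDiffAt ℝ n f (c * x)) :
    iteratedDeriv n (fun t => f (c * t)) x = c ^ n * iteratedDeriv n f (c * x) := by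
  induction n generalizing x with
  | zero => simp
  | succ n ih =>
    have hev : iteratedDeriv n (fun t => f (c * t)) =ᶠ[𝓝 x]
        fun t => c ^ n * iteratedDeriv n f (c * t) := by
      have hmul : Tendsto (fun t : ℝ => c * t) (𝓝 x) (𝓝 (c * x)) := tendsto_id.const_mul c
      filter_upwards [hmul.eventually (hf.eventually (by simp))] with t ht
      exact ih (ht.of_le (by exact_mod_cast n.le_succ))
    rw [iteratedDeriv_succ, iteratedDeriv_succ, hev.deriv_eq, deriv_const_mul_field,
      deriv_comp_mul_left]
    simp [pow_succ, mul_assoc]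

theorem analyticAt_log_cos : AnalyticAt ℝ (fun t => Real.log (Real.cos t)) 0 :=
  Real.analyticAt_cos.log (by simp)

theorem cos_eventuallyEq_exp_log_cos :
    Real.cos =ᶠ[𝓝 0] fun t => Real.exp (Real.log (Real.cos t)) := by
  filter_upwards [Real.continuous_cos.continuousAt.eventually_const_lt
    (Real.cos_zero.symm ▸ zero_lt_one)] with t ht
  rw [Real.exp_log ht]

theorem iteratedDeriv_one_log_cos : iteratedDeriv 1 (fun t => Real.log (Real.cos t)) 0 = 0 := by
  simp [iteratedDeriv_one]

theorem iteratedDeriv_two_log_cos : iteratedDeriv 2 (fun t => Real.log (Real.cos t)) 0 = -1 := by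
  rw [← iteratedDeriv_two_exp_comp analyticAt_log_cos.contDiffAt (by simp)
    iteratedDeriv_one_log_cos, ← cos_eventuallyEq_exp_log_cos.iteratedDeriv_eq]
  simp [iteratedDeriv_succ]

theorem iteratedDeriv_three_log_cos : iteratedDeriv 3 (fun t => Real.log (Real.cos t)) 0 = 0 := by
  rw [← iteratedDeriv_three_exp_comp analyticAt_log_cos.contDiffAt (by simp)
    iteratedDeriv_one_log_cos, ← cos_eventuallyEq_exp_log_cos.iteratedDeriv_eq]
  simp [iteratedDeriv_succ]

theorem iteratedDeriv_four_log_cos : iteratedDeriv 4 (fun t => Real.log (Real.cos t)) 0 = -2 := by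
  have h := iteratedDeriv_four_exp_comp analyticAt_log_cos.contDiffAt (by simp)
    iteratedDeriv_one_log_cos
  rw [← cos_eventuallyEq_exp_log_cos.iteratedDeriv_eq, iteratedDeriv_two_log_cos] at h
  have hcos : iteratedDeriv 4 Real.cos 0 = 1 := by simp [iteratedDeriv_succ]
  linarith

theorem iteratedDeriv_five_log_cos : iteratedDeriv 5 (fun t => Real.log (Real.cos t)) 0 = 0 := by
  have h := iteratedDeriv_five_exp_comp analyticAt_log_cos.contDiffAt (by simp)
    iteratedDeriv_one_log_cos
  rw [← cos_eventuallyEq_exp_log_cos.iteratedDeriv_eq, iteratedDeriv_three_log_cos] at h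
  have hcos : iteratedDeriv 5 Real.cos 0 = 0 := by simp [iteratedDeriv_succ]
  linarith

end Calculus

section LogGamma

open Filter Topology Finset

theorem hasFPowerSeriesAt_ofScalars_of_hasSum {𝕜 : Type*} [NontriviallyNormedField 𝕜]
    {f : 𝕜 → 𝕜} {a : ℕ → 𝕜} {x : 𝕜}
    (h : ∀ᶠ z in 𝓝 0, HasSum (fun n => a n * z ^ n) (f (x + z))) :
    HasFPowerSeriesAt f (FormalMultilinearSeries.ofScalars 𝕜 a) x := by
  rw [hasFPowerSeriesAt_iff]
  simpa only [FormalMultilinearSeries.coeff_ofScalars, smul_eq_mul, mul_comm] using h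

theorem iteratedDeriv_eq_factorial_mul_of_hasFPowerSeriesAt {𝕜 : Type*} [NontriviallyNormedField 𝕜]
    [CompleteSpace 𝕜] [CharZero 𝕜] {f : 𝕜 → 𝕜} {a : ℕ → 𝕜} {x : 𝕜}
    (h : HasFPowerSeriesAt f (FormalMultilinearSeries.ofScalars 𝕜 a) x) (n : ℕ) :
    iteratedDeriv n f x = n.factorial * a n := by
  have hcoeff := congrArg (FormalMultilinearSeries.coeff · n)
    (h.analyticAt.hasFPowerSeriesAt.eq_formalMultilinearSeries h)
  simp only [FormalMultilinearSeries.coeff_ofScalars] at hcoeff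
  rw [← hcoeff, mul_div_cancel₀]
  exact_mod_cast n.factorial_ne_zero

theorem hasSum_zetaR {k : ℕ} (hk : 1 < k) :
    HasSum (fun n : ℕ => 1 / ((n : ℝ) + 1) ^ k) (zetaR k) := by
  have hsum : HasSum (fun n : ℕ => 1 / (n : ℝ) ^ k) (zetaR k) := by
    convert! (Real.summable_one_div_nat_pow.mpr hk).hasSum using 1
    rw [zetaR, Complex.ofReal_natCast, zeta_nat_eq_tsum_of_gt_one hk, ← Complex.ofReal_re (∑' _, _)]
    push_cast
    rfl
  rw [← hasSum_nat_add_iff' 1] at hsum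
  simpa [show k ≠ 0 by omega] using hsum

theorem zetaR_two : zetaR 2 = Real.pi ^ 2 / 6 := by
  refine (hasSum_zetaR one_lt_two).unique ?_
  simpa using (hasSum_nat_add_iff' 1).mpr hasSum_zeta_two

theorem zetaR_four : zetaR 4 = Real.pi ^ 4 / 90 := by
  refine (hasSum_zetaR (by norm_num : 1 < 4)).unique ?_
  simpa using (hasSum_nat_add_iff' 1).mpr hasSum_zeta_four

open Real.BohrMollerup in
theorem sum_range_neg_log_one_sub_div {x : ℝ} (hx : x < 1) (n : ℕ) :
    ∑ m ∈ range (n + 1), (-Real.log (1 - x / (m + 1)) - x / (m + 1)) =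
      logGammaSeq (1 - x) n + (1 - x) * (Real.log (n + 1) - Real.log n) -
        x * (harmonic (n + 1) - Real.log ((n + 1 : ℕ) : ℝ)) := by
  have hterm (m : ℕ) : -Real.log (1 - x / (m + 1)) - x / (m + 1) =
      Real.log ((m + 1 : ℕ) : ℝ) - Real.log (1 - x + m) - x * ((m + 1 : ℕ) : ℝ)⁻¹ := by
    have hm : (0 : ℝ) < m + 1 := by positivity
    rw [show 1 - x / (m + 1) = (1 - x + m) / (m + 1) by field_simp; ring,
      Real.log_div (by linarith) hm.ne']
    push_cast
    ring
  have hlog : ∑ m ∈ range (n + 1), Real.log ((m + 1 : ℕ) : ℝ) =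
      Real.log (n + 1) + Real.log n.factorial := by
    rw [← Real.log_prod (fun m _ => by positivity), ← Nat.cast_prod,
      prod_range_add_one_eq_factorial, Nat.factorial_succ, Nat.cast_mul,
      Real.log_mul (by positivity) (by positivity)]
    push_cast
    rfl
  simp only [hterm, sum_sub_distrib, ← mul_sum, hlog, logGammaSeq, harmonic]
  push_cast
  ring

theorem tendsto_sum_range_neg_log_one_sub_div {x : ℝ} (hx : x < 1) :
    Tendsto (fun n : ℕ => ∑ m ∈ range n, (-Real.log (1 - x / (m + 1)) - x / (m + 1))) atTop
      (𝓝 (Real.log (Real.Gamma (1 - x)) - Real.eulerMascheroniConstant * x)) := by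
  rw [← tendsto_add_atTop_iff_nat 1]
  simp only [sum_range_neg_log_one_sub_div hx]
  have hγ := (tendsto_add_atTop_iff_nat 1).mpr Real.tendsto_harmonic_sub_log
  have hlog := Real.tendsto_log_nat_add_one_sub_log
  convert! ((Real.BohrMollerup.tendsto_log_gamma (sub_pos.mpr hx)).add (hlog.const_mul (1 - x))).sub
    (hγ.const_mul x) using 2
  ring

theorem summable_pow_div_zeta {x : ℝ} (hx : |x| < 1) :
    Summable fun p : ℕ × ℕ => (x / (p.1 + 1)) ^ (p.2 + 2) / (p.2 + 2) := by
  have hζ := (hasSum_zetaR one_lt_two).summable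
  refine (hζ.mul_of_nonneg (summable_geometric_of_lt_one (abs_nonneg x) hx)
    (fun m => by positivity) (fun k => by positivity)).of_norm_bounded fun ⟨m, k⟩ => ?_
  have hm : (1 : ℝ) ≤ m + 1 := by norm_cast; omega
  rw [norm_div, norm_pow, norm_div, Real.norm_eq_abs, Real.norm_of_nonneg (by positivity),
    Real.norm_of_nonneg (by positivity)]
  calc (|x| / (m + 1)) ^ (k + 2) / (k + 2) ≤ (|x| / (m + 1)) ^ (k + 2) :=
        div_le_self (by positivity) (by norm_cast; omega)
    _ = |x| ^ 2 * (1 / (m + 1) ^ 2) * (|x| / (m + 1)) ^ k := by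
      rw [div_pow, div_pow, pow_add, pow_add]; field_simp
    _ ≤ 1 * (1 / (m + 1) ^ 2) * |x| ^ k := by
      gcongr
      · exact pow_le_one₀ (abs_nonneg x) hx.le
      · exact div_le_self (abs_nonneg x) hm
    _ = 1 / (m + 1) ^ 2 * |x| ^ k := by rw [one_mul]

theorem hasSum_pow_div_log_sub {y : ℝ} (hy : |y| < 1) :
    HasSum (fun k : ℕ => y ^ (k + 2) / (k + 2)) (-Real.log (1 - y) - y) := by
  have h := (hasSum_nat_add_iff' 1).mpr (Real.hasSum_pow_div_log_of_abs_lt_one hy)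
  simpa [add_assoc, one_add_one_eq_two] using h

/-- The function `x ↦ log Γ(1 - x)` with the linear term of its Taylor expansion at `0` removed. -/
noncomputable def centeredLogGamma (x : ℝ) : ℝ :=
  Real.log (Real.Gamma (1 - x)) - Real.eulerMascheroniConstant * x

theorem hasSum_centeredLogGamma {x : ℝ} (hx : |x| < 1) :
    HasSum (fun k : ℕ => zetaR (k + 2 : ℕ) / (k + 2) * x ^ (k + 2)) (centeredLogGamma x) := by
  have hdouble := (summable_pow_div_zeta hx).hasSum
  have hrows := hdouble.prod_fiberwise fun m => hasSum_pow_div_log_sub (y := x / (m + 1)) <| by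
    rw [abs_div, abs_of_pos (by positivity : (0 : ℝ) < m + 1), div_lt_one (by positivity)]
    exact hx.trans_le (by norm_cast; omega)
  rw [centeredLogGamma, tendsto_nhds_unique (tendsto_sum_range_neg_log_one_sub_div (abs_lt.mp hx).2)
    hrows.tendsto_sum_nat]
  refine ((Equiv.prodComm ℕ ℕ).hasSum_iff.mpr hdouble).prod_fiberwise fun k => ?_
  convert! (hasSum_zetaR (by omega : 1 < k + 2)).mul_right (x ^ (k + 2) / (k + 2)) using 1
  · ext m
    simp only [Function.comp_apply, Equiv.prodComm_apply, Prod.swap_prod_mk, div_pow]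
    ring
  · ring

/-- The Taylor coefficients of `centeredLogGamma` at `0`. -/
noncomputable def centeredLogGammaCoeff : ℕ → ℝ
  | 0 => 0
  | 1 => 0
  | k + 2 => zetaR (k + 2 : ℕ) / (k + 2)

theorem hasFPowerSeriesAt_centeredLogGamma :
    HasFPowerSeriesAt centeredLogGamma
      (FormalMultilinearSeries.ofScalars ℝ centeredLogGammaCoeff) 0 := by
  refine hasFPowerSeriesAt_ofScalars_of_hasSum ?_
  filter_upwards [Metric.ball_mem_nhds 0 one_pos] with x hx
  rw [← hasSum_nat_add_iff' 2]
  simpa [sum_range_succ, centeredLogGammaCoeff] using hasSum_centeredLogGamma (by simpa using hx)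

theorem iteratedDeriv_one_centeredLogGamma : iteratedDeriv 1 centeredLogGamma 0 = 0 := by
  rw [iteratedDeriv_eq_factorial_mul_of_hasFPowerSeriesAt hasFPowerSeriesAt_centeredLogGamma,
    centeredLogGammaCoeff, mul_zero]

theorem iteratedDeriv_centeredLogGamma (k : ℕ) :
    iteratedDeriv (k + 2) centeredLogGamma 0 = (k + 1).factorial * zetaR (k + 2 : ℕ) := by
  rw [iteratedDeriv_eq_factorial_mul_of_hasFPowerSeriesAt hasFPowerSeriesAt_centeredLogGamma,
    centeredLogGammaCoeff, Nat.factorial_succ]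
  push_cast
  field_simp
  ring

end LogGamma

section MomentsFromMGF

open Filter Topology Set

variable {Ω : Type*} {mΩ : MeasurableSpace Ω} {μ : Measure Ω} {V : Ω → ℝ} {a : ℝ}

theorem tendsto_integral_pow_mul_exp_nhdsLT_zero {n : ℕ} (ha : a < 0)
    (hexp : Ioo a 0 ⊆ integrableExpSet V μ) (hV : Integrable (fun ω => V ω ^ n) μ) :
    Tendsto (fun t => ∫ ω, V ω ^ n * Real.exp (t * V ω) ∂μ) (𝓝[<] 0) (𝓝 (∫ ω, V ω ^ n ∂μ)) := by
  have hint : Ioo a 0 ⊆ interior (integrableExpSet V μ) := interior_maximal hexp isOpen_Ioo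
  have hmid : a / 2 ∈ Ioo a 0 := ⟨by linarith, by linarith⟩
  have hV_meas := aemeasurable_of_mem_interior_integrableExpSet (hint hmid)
  refine tendsto_integral_filter_of_dominated_convergence
    (fun ω => |V ω| ^ n * Real.exp (a / 2 * V ω) + |V ω| ^ n)
    (Eventually.of_forall fun t => by fun_prop) ?_
    ((integrable_pow_abs_mul_exp_of_mem_interior_integrableExpSet (hint hmid) n).add
      (by simpa using hV.abs)) (ae_of_all _ fun ω => ?_)
  · filter_upwards [Ioo_mem_nhdsLT hmid.2] with t ht
    refine ae_of_all _ fun ω => ?_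
    rw [norm_mul, norm_pow, Real.norm_eq_abs, Real.norm_of_nonneg (Real.exp_nonneg _),
      ← mul_add_one]
    gcongr
    rcases le_total (V ω) 0 with hneg | hpos
    · exact (Real.exp_le_exp.mpr (mul_le_mul_of_nonpos_right ht.1.le hneg)).trans
        (le_add_of_nonneg_right zero_le_one)
    · exact (Real.exp_le_one_iff.mpr (mul_nonpos_of_nonpos_of_nonneg ht.2.le hpos)).trans
        (le_add_of_nonneg_left (Real.exp_nonneg _))
  · have hcont : Continuous fun t => V ω ^ n * Real.exp (t * V ω) := by fun_prop
    simpa using (hcont.tendsto 0).mono_left nhdsWithin_le_nhds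

theorem integral_pow_eq_iteratedDeriv_of_mgf_eqOn {R : ℝ → ℝ} {n : ℕ} (ha : a < 0)
    (hexp : Ioo a 0 ⊆ integrableExpSet V μ) (hV : Integrable (fun ω => V ω ^ n) μ)
    (hR : ContDiffAt ℝ n R 0) (hmgf : EqOn (mgf V μ) R (Ioo a 0)) :
    ∫ ω, V ω ^ n ∂μ = iteratedDeriv n R 0 := by
  have hderiv : ∀ t ∈ Ioo a 0, ∫ ω, V ω ^ n * Real.exp (t * V ω) ∂μ = iteratedDeriv n R t := by
    intro t ht
    rw [← iteratedDeriv_mgf (interior_maximal hexp isOpen_Ioo ht),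
      (hmgf.eventuallyEq_of_mem (isOpen_Ioo.mem_nhds ht)).iteratedDeriv_eq]
  have hcont : ContinuousAt (iteratedDeriv n R) 0 := by
    rw [iteratedDeriv_eq_equiv_comp]
    exact (LinearIsometryEquiv.continuous _).continuousAt.comp
      (hR.continuousAt_iteratedFDeriv le_rfl)
  refine tendsto_nhds_unique (tendsto_integral_pow_mul_exp_nhdsLT_zero ha hexp hV)
    ((hcont.tendsto.mono_left nhdsWithin_le_nhds).congr' ?_)
  filter_upwards [Ioo_mem_nhdsLT ha] with t ht
  exact (hderiv t ht).symm

end MomentsFromMGF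

section GammaIntegral

open Filter Topology Set

theorem integrableOn_rpow_mul_exp_neg_mul_Ioi {a r : ℝ} (ha : 0 < a) (hr : 0 < r) :
    IntegrableOn (fun t : ℝ => t ^ (a - 1) * Real.exp (-(r * t))) (Ioi 0) := by
  simpa using
    integrableOn_rpow_mul_exp_neg_mul_rpow (p := 1) (by linarith : -1 < a - 1) zero_lt_one hr

theorem analyticOnNhd_integral_rpow_mul_cexp_neg_mul {a : ℝ} (ha : 0 < a) :
    AnalyticOnNhd ℂ
      (fun r : ℂ => ∫ t in Ioi (0 : ℝ), ((t ^ (a - 1) : ℝ) : ℂ) * Complex.exp (-(r * t)))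
      {r | 0 < r.re} := by
  let μ : Measure ℝ := (volume.restrict (Ioi 0)).withDensity fun t => ENNReal.ofReal (t ^ (a - 1))
  have hdens : Measurable fun t : ℝ => ENNReal.ofReal (t ^ (a - 1)) := by fun_prop
  have hfin : ∀ᵐ t ∂volume.restrict (Ioi (0 : ℝ)), ENNReal.ofReal (t ^ (a - 1)) < ⊤ :=
    ae_of_all _ fun _ => ENNReal.ofReal_lt_top
  have hset : Iio 0 ⊆ integrableExpSet id μ := fun x hx => by
    rw [integrableExpSet, mem_ofPred_eq,
      integrable_withDensity_iff_integrable_smul' hdens hfin]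
    refine (integrableOn_rpow_mul_exp_neg_mul_Ioi ha (neg_pos.mpr hx)).congr_fun (fun t ht => ?_)
      measurableSet_Ioi
    simp [ENNReal.toReal_ofReal (Real.rpow_nonneg (le_of_lt ht) _)]
  have hmgf (r : ℂ) : complexMGF id μ (-r) =
      ∫ t in Ioi (0 : ℝ), ((t ^ (a - 1) : ℝ) : ℂ) * Complex.exp (-(r * t)) := by
    rw [complexMGF, integral_withDensity_eq_integral_toReal_smul hdens hfin]
    refine setIntegral_congr_fun measurableSet_Ioi fun t ht => ?_
    simp [ENNReal.toReal_ofReal (Real.rpow_nonneg (le_of_lt ht) _)]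
  simp only [← hmgf]
  intro r hr
  exact (analyticAt_complexMGF (interior_maximal hset isOpen_Iio (by simpa using hr))).fun_comp
    analyticAt_id.neg

theorem integral_rpow_mul_cexp_neg_mul_Ioi {a : ℝ} (ha : 0 < a) {r : ℂ} (hr : 0 < r.re) :
    ∫ t in Ioi (0 : ℝ), ((t ^ (a - 1) : ℝ) : ℂ) * Complex.exp (-(r * t)) =
      r ^ (-a : ℂ) * Real.Gamma a := by
  have hanalytic : AnalyticOnNhd ℂ (fun r : ℂ => r ^ (-a : ℂ) * Real.Gamma a) {r | 0 < r.re} :=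
    fun r hr => (analyticAt_id.cpow analyticAt_const (Or.inl hr)).mul analyticAt_const
  have hreal (x : ℝ) (hx : 0 < x) :
      ∫ t in Ioi (0 : ℝ), ((t ^ (a - 1) : ℝ) : ℂ) * Complex.exp (-(x * t)) =
        (x : ℂ) ^ (-a : ℂ) * Real.Gamma a := by
    have h := congrArg Complex.ofReal (Real.integral_rpow_mul_exp_neg_mul_Ioi ha hx)
    rw [one_div, Real.inv_rpow hx.le, ← Real.rpow_neg hx.le, ← integral_complex_ofReal] at h
    simpa [Complex.ofReal_cpow hx.le] using h
  have htendsto : Tendsto Complex.ofReal (𝓝[≠] 1) (𝓝[≠] 1) :=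
    Complex.continuous_ofReal.continuousAt.continuousWithinAt.tendsto_nhdsWithin fun x hx => by
      simpa using hx
  refine (analyticOnNhd_integral_rpow_mul_cexp_neg_mul ha).eqOn_of_preconnected_of_frequently_eq
    hanalytic (convex_halfSpace_re_gt 0).isPreconnected (z₀ := 1) (by simp)
    (htendsto.frequently (Eventually.frequently ?_)) hr
  filter_upwards [nhdsWithin_le_nhds (lt_mem_nhds zero_lt_one)] with x hx using hreal x hx

theorem integral_rpow_mul_cexp_neg_mul_rpow_Ioi {s α : ℝ} (hs : 0 < s) (hα : 0 < α) {r : ℂ}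
    (hr : 0 < r.re) :
    ∫ t in Ioi (0 : ℝ), ((t ^ (s - 1) : ℝ) : ℂ) * Complex.exp (-(r * ((t ^ α : ℝ) : ℂ))) =
      (α : ℂ)⁻¹ * (r ^ (-(s / α) : ℂ) * Real.Gamma (s / α)) := by
  have hsub := integral_rpow_mul_cexp_neg_mul_Ioi (div_pos hs hα) hr
  rw [← integral_comp_rpow_Ioi_of_pos hα] at hsub
  rw [← Complex.ofReal_div, ← hsub, ← integral_const_mul]
  refine setIntegral_congr_fun measurableSet_Ioi fun t (ht : 0 < t) => ?_
  have hpow : t ^ (s - 1) = t ^ (α - 1) * (t ^ α) ^ (s / α - 1) := by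
    rw [← Real.rpow_mul ht.le, ← Real.rpow_add ht]
    congr 1
    field_simp
    ring
  have hα' : (α : ℂ) ≠ 0 := by exact_mod_cast hα.ne'
  simp only [hpow, Complex.real_smul]
  push_cast
  field_simp

end GammaIntegral

section NegativeMoments

open Filter Topology Set

theorem cos_pi_div_two_mul_pos {s : ℝ} (hs : |s| < 1) : 0 < Real.cos (Real.pi / 2 * s) := by
  refine Real.cos_pos_of_mem_Ioo (abs_lt.mp ?_)
  rw [abs_mul, abs_of_pos Real.pi_div_two_pos]
  exact mul_lt_of_lt_one_right Real.pi_div_two_pos hs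

theorem norm_cpow_neg_mul_cos_le_re {s : ℝ} (hs : 0 < s) (hs2 : s ≤ 2) {z : ℂ} (hz : 0 ≤ z.re) :
    ‖z ^ (-s : ℂ)‖ * Real.cos (Real.pi / 2 * s) ≤ (z ^ (-s : ℂ)).re := by
  have harg : |z.arg| ≤ Real.pi / 2 := Complex.abs_arg_le_pi_div_two_iff.mpr hz
  rw [← Complex.ofReal_neg, Complex.norm_cpow_real, Complex.cpow_ofReal_re,
    ← Real.cos_abs (z.arg * -s), abs_mul, abs_neg, abs_of_pos hs]
  gcongr
  exact Real.cos_le_cos_of_nonneg_of_le_pi (by positivity) (by nlinarith [Real.pi_pos]) (by gcongr)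

theorem re_neg_mul_I_cpow_neg (s : ℝ) {x : ℝ} (hx : x ≠ 0) :
    ((-(x * Complex.I)) ^ (-s : ℂ)).re = |x| ^ (-s) * Real.cos (Real.pi / 2 * s) := by
  have harg : Real.cos ((-(x * Complex.I)).arg * -s) = Real.cos (Real.pi / 2 * s) := by
    rcases hx.lt_or_gt with hneg | hpos
    · rw [show -(x * Complex.I) = ((-x : ℝ) : ℂ) * Complex.I by push_cast; ring,
        Complex.arg_real_mul _ (neg_pos.mpr hneg), Complex.arg_I, mul_neg, Real.cos_neg]
    · rw [← mul_neg, Complex.arg_real_mul _ hpos, Complex.arg_neg_I, neg_mul_neg]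
  rw [← Complex.ofReal_neg, Complex.cpow_ofReal_re, harg]
  simp

theorem norm_exp_neg_mul_mul_le {ε k : ℝ} (hε : 0 ≤ ε) (hk : 0 ≤ k) (z : ℂ) :
    ‖(Real.exp (-(ε * k)) : ℂ) * z‖ ≤ ‖z‖ := by
  rw [norm_mul, Complex.norm_real, Real.norm_of_nonneg (Real.exp_nonneg _)]
  exact mul_le_of_le_one_left (norm_nonneg _)
    (Real.exp_le_one_iff.mpr (neg_nonpos.mpr (mul_nonneg hε hk)))

variable {s x : ℝ}

theorem norm_sub_mul_I_cpow_neg_le (hs : 0 ≤ s) (hx : x ≠ 0) (ε : ℝ) :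
    ‖(ε - x * Complex.I : ℂ) ^ (-s : ℂ)‖ ≤ |x| ^ (-s) := by
  rw [← Complex.ofReal_neg, Complex.norm_cpow_real]
  refine Real.rpow_le_rpow_of_nonpos (abs_pos.mpr hx) ?_ (neg_nonpos.mpr hs)
  simpa using Complex.abs_im_le_norm (ε - x * Complex.I : ℂ)

theorem tendsto_sub_mul_I_cpow_neg (s : ℝ) (hx : x ≠ 0) :
    Tendsto (fun ε : ℝ => (ε - x * Complex.I : ℂ) ^ (-s : ℂ)) (𝓝[>] 0)
      (𝓝 ((-(x * Complex.I)) ^ (-s : ℂ))) := by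
  have hslit : (-(x * Complex.I) : ℂ) ∈ Complex.slitPlane := Or.inr (by simpa using hx)
  have hbase : Tendsto (fun ε : ℝ => (ε - x * Complex.I : ℂ)) (𝓝[>] 0) (𝓝 (-(x * Complex.I))) := by
    have hcont : Continuous fun ε : ℝ => (ε - x * Complex.I : ℂ) := by fun_prop
    simpa using (hcont.tendsto 0).mono_left nhdsWithin_le_nhds
  exact (continuousAt_cpow_const hslit).tendsto.comp hbase

variable {μ : Measure ℝ} [IsFiniteMeasure μ]

theorem integrable_sub_mul_I_cpow_neg (hs : 0 ≤ s) {ε : ℝ} (hε : 0 < ε) :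
    Integrable (fun x : ℝ => (ε - x * Complex.I : ℂ) ^ (-s : ℂ)) μ := by
  refine Integrable.of_bound (Measurable.aestronglyMeasurable (by fun_prop)) (ε ^ (-s))
    (ae_of_all _ fun x => ?_)
  rw [← Complex.ofReal_neg, Complex.norm_cpow_real]
  refine Real.rpow_le_rpow_of_nonpos hε ?_ (neg_nonpos.mpr hs)
  simpa using (Complex.re_le_norm (ε - x * Complex.I : ℂ))

theorem integrable_prod_rpow_mul_cexp_neg_mul (hs : 0 < s) {ε : ℝ} (hε : 0 < ε) :
    Integrable (Function.uncurry fun x k : ℝ =>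
      ((k ^ (s - 1) : ℝ) : ℂ) * Complex.exp (-((ε - x * Complex.I) * k)))
      (μ.prod (volume.restrict (Ioi 0))) := by
  refine ((integrableOn_rpow_mul_exp_neg_mul_Ioi hs hε).comp_snd μ).mono'
    (by unfold Function.uncurry; fun_prop) ?_
  filter_upwards [Measure.quasiMeasurePreserving_snd.ae (ae_restrict_mem measurableSet_Ioi)]
    with p (hp : 0 < p.2)
  simp [Function.uncurry, Complex.norm_exp, abs_of_nonneg (Real.rpow_nonneg hp.le _)]

theorem integral_sub_mul_I_cpow_neg_mul_Gamma (hs : 0 < s) {ε : ℝ} (hε : 0 < ε) :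
    (∫ x : ℝ, (ε - x * Complex.I : ℂ) ^ (-s : ℂ) ∂μ) * Real.Gamma s =
      ∫ k in Ioi (0 : ℝ), (Real.exp (-(ε * k)) : ℂ) * ((k ^ (s - 1) : ℝ) * charFun μ k) := by
  have hGamma (x : ℝ) := integral_rpow_mul_cexp_neg_mul_Ioi hs
    (r := ε - x * Complex.I) (by simpa using hε)
  rw [← integral_mul_const]
  simp only [← hGamma]
  rw [integral_integral_swap (integrable_prod_rpow_mul_cexp_neg_mul hs hε)]
  refine integral_congr_ae (ae_of_all _ fun k => ?_)
  simp only [charFun_apply_real, ← integral_const_mul]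
  refine integral_congr_ae (ae_of_all _ fun x => ?_)
  simp only [Complex.ofReal_exp, mul_left_comm (Complex.exp _), ← Complex.exp_add]
  congr 2
  push_cast
  ring

theorem integral_norm_sub_mul_I_cpow_neg_le (hs : 0 < s) (hs1 : s < 1) {ε : ℝ} (hε : 0 < ε)
    (hφ : IntegrableOn (fun k : ℝ => ((k ^ (s - 1) : ℝ) : ℂ) * charFun μ k) (Ioi 0)) :
    ∫ x : ℝ, ‖(ε - x * Complex.I : ℂ) ^ (-s : ℂ)‖ ∂μ ≤
      (∫ k in Ioi (0 : ℝ), ‖((k ^ (s - 1) : ℝ) : ℂ) * charFun μ k‖) / Real.Gamma s /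
        Real.cos (Real.pi / 2 * s) := by
  have hcos : 0 < Real.cos (Real.pi / 2 * s) :=
    cos_pi_div_two_mul_pos (by rwa [abs_of_pos hs])
  have hΓ := Real.Gamma_pos_of_pos hs
  have hint := integrable_sub_mul_I_cpow_neg (μ := μ) hs.le hε
  rw [le_div_iff₀ hcos, le_div_iff₀ hΓ, ← integral_mul_const]
  calc (∫ x : ℝ, ‖(ε - x * Complex.I : ℂ) ^ (-s : ℂ)‖ * Real.cos (Real.pi / 2 * s) ∂μ) *
        Real.Gamma s
      ≤ (∫ x : ℝ, ((ε - x * Complex.I : ℂ) ^ (-s : ℂ)).re ∂μ) * Real.Gamma s := by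
        gcongr
        · exact hint.norm.mul_const _
        · exact hint.re
        · intro x
          exact norm_cpow_neg_mul_cos_le_re hs (by linarith) (by simpa using hε.le)
    _ = ((∫ x : ℝ, (ε - x * Complex.I : ℂ) ^ (-s : ℂ) ∂μ) * Real.Gamma s).re := by
        rw [Complex.re_mul_ofReal]
        congr 1
        exact integral_re hint
    _ ≤ ‖∫ k in Ioi (0 : ℝ), (Real.exp (-(ε * k)) : ℂ) * ((k ^ (s - 1) : ℝ) * charFun μ k)‖ := by
        rw [integral_sub_mul_I_cpow_neg_mul_Gamma hs hε]
        exact Complex.re_le_norm _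
    _ ≤ ∫ k in Ioi (0 : ℝ), ‖((k ^ (s - 1) : ℝ) : ℂ) * charFun μ k‖ := by
        refine norm_integral_le_of_norm_le hφ.norm ?_
        filter_upwards [ae_restrict_mem measurableSet_Ioi] with k hk
        exact norm_exp_neg_mul_mul_le hε.le (le_of_lt hk) _

-- The damped moments `E[|ε - i X| ^ (-s)]` stay bounded as `ε ↓ 0` because the argument of
-- `(ε - i X) ^ (-s)` is at most `π s / 2 < π / 2`, so its real part controls its norm.
theorem integrable_abs_rpow_neg_of_integrableOn_charFun (hμ : μ {0} = 0) (hs : 0 < s) (hs1 : s < 1)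
    (hφ : IntegrableOn (fun k : ℝ => ((k ^ (s - 1) : ℝ) : ℂ) * charFun μ k) (Ioi 0)) :
    Integrable (fun x => |x| ^ (-s)) μ := by
  obtain ⟨ε, -, hε, hε0⟩ := exists_seq_strictAnti_tendsto' (zero_lt_one' ℝ)
  have hε0' : Tendsto ε atTop (𝓝[>] 0) :=
    tendsto_nhdsWithin_iff.mpr ⟨hε0, Eventually.of_forall fun n => (hε n).1⟩
  have hne : ∀ᵐ x ∂μ, x ≠ 0 := measure_eq_zero_iff_ae_notMem.mp hμ
  refine integrable_of_tendsto (G := fun n x => ‖(ε n - x * Complex.I : ℂ) ^ (-s : ℂ)‖) ?_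
    (fun n => (integrable_sub_mul_I_cpow_neg hs.le (hε n).1).norm.aestronglyMeasurable) ?_
  · filter_upwards [hne] with x hx
    have hlim : ‖(-(x * Complex.I)) ^ (-s : ℂ)‖ = |x| ^ (-s) := by
      rw [← Complex.ofReal_neg, Complex.norm_cpow_real]
      simp
    exact hlim ▸ ((tendsto_sub_mul_I_cpow_neg s hx).comp hε0').norm
  · have hbound (n : ℕ) : ∫⁻ x, ‖‖(ε n - x * Complex.I : ℂ) ^ (-s : ℂ)‖‖ₑ ∂μ ≤
        ENNReal.ofReal ((∫ k in Ioi (0 : ℝ), ‖((k ^ (s - 1) : ℝ) : ℂ) * charFun μ k‖) /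
          Real.Gamma s / Real.cos (Real.pi / 2 * s)) := by
      simp only [enorm_norm]
      rw [← ofReal_integral_norm_eq_lintegral_enorm (integrable_sub_mul_I_cpow_neg hs.le (hε n).1)]
      exact ENNReal.ofReal_le_ofReal (integral_norm_sub_mul_I_cpow_neg_le hs hs1 (hε n).1 hφ)
    exact ((liminf_le_of_frequently_le' (Frequently.of_forall hbound)).trans_lt
      ENNReal.ofReal_lt_top).ne

theorem integral_neg_mul_I_cpow_neg_mul_Gamma (hμ : μ {0} = 0) (hs : 0 < s) (hs1 : s < 1)
    (hφ : IntegrableOn (fun k : ℝ => ((k ^ (s - 1) : ℝ) : ℂ) * charFun μ k) (Ioi 0)) :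
    (∫ x : ℝ, (-(x * Complex.I)) ^ (-s : ℂ) ∂μ) * Real.Gamma s =
      ∫ k in Ioi (0 : ℝ), ((k ^ (s - 1) : ℝ) : ℂ) * charFun μ k := by
  have hne : ∀ᵐ x ∂μ, x ≠ 0 := measure_eq_zero_iff_ae_notMem.mp hμ
  have hpos : ∀ᶠ ε : ℝ in 𝓝[>] 0, 0 < ε := self_mem_nhdsWithin
  have hleft : Tendsto (fun ε : ℝ => (∫ x : ℝ, (ε - x * Complex.I : ℂ) ^ (-s : ℂ) ∂μ)) (𝓝[>] 0)
      (𝓝 (∫ x : ℝ, (-(x * Complex.I)) ^ (-s : ℂ) ∂μ)) := by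
    refine tendsto_integral_filter_of_dominated_convergence (fun x => |x| ^ (-s)) ?_ ?_
      (integrable_abs_rpow_neg_of_integrableOn_charFun hμ hs hs1 hφ) ?_
    · filter_upwards [hpos] with ε hε
      exact (integrable_sub_mul_I_cpow_neg hs.le hε).aestronglyMeasurable
    · filter_upwards with ε
      filter_upwards [hne] with x hx using norm_sub_mul_I_cpow_neg_le hs.le hx ε
    · filter_upwards [hne] with x hx using tendsto_sub_mul_I_cpow_neg s hx
  have hright : Tendsto (fun ε : ℝ => ∫ k in Ioi (0 : ℝ),
        (Real.exp (-(ε * k)) : ℂ) * ((k ^ (s - 1) : ℝ) * charFun μ k)) (𝓝[>] 0)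
      (𝓝 (∫ k in Ioi (0 : ℝ), ((k ^ (s - 1) : ℝ) : ℂ) * charFun μ k)) := by
    refine tendsto_integral_filter_of_dominated_convergence _ ?_ ?_ hφ.norm
      (ae_of_all _ fun k => ?_)
    · exact Eventually.of_forall fun ε => by fun_prop
    · filter_upwards [hpos] with ε hε
      filter_upwards [ae_restrict_mem measurableSet_Ioi] with k hk
      exact norm_exp_neg_mul_mul_le hε.le (le_of_lt hk) _
    · have hcont : Continuous fun ε : ℝ =>
          (Real.exp (-(ε * k)) : ℂ) * ((k ^ (s - 1) : ℝ) * charFun μ k) := by fun_prop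
      simpa using (hcont.tendsto 0).mono_left nhdsWithin_le_nhds
  refine tendsto_nhds_unique (hleft.mul_const _) (hright.congr' ?_)
  filter_upwards [hpos] with ε hε using (integral_sub_mul_I_cpow_neg_mul_Gamma hs hε).symm

theorem integral_abs_rpow_neg_mul_cos_mul_Gamma (hμ : μ {0} = 0) (hs : 0 < s) (hs1 : s < 1)
    (hφ : IntegrableOn (fun k : ℝ => ((k ^ (s - 1) : ℝ) : ℂ) * charFun μ k) (Ioi 0)) :
    (∫ x, |x| ^ (-s) ∂μ) * Real.cos (Real.pi / 2 * s) * Real.Gamma s =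
      (∫ k in Ioi (0 : ℝ), ((k ^ (s - 1) : ℝ) : ℂ) * charFun μ k).re := by
  have hne : ∀ᵐ x ∂μ, x ≠ 0 := measure_eq_zero_iff_ae_notMem.mp hμ
  have hint : Integrable (fun x : ℝ => (-(x * Complex.I)) ^ (-s : ℂ)) μ := by
    refine (integrable_abs_rpow_neg_of_integrableOn_charFun hμ hs hs1 hφ).mono'
      (Measurable.aestronglyMeasurable (by fun_prop)) ?_
    filter_upwards [hne] with x hx
    simpa using norm_sub_mul_I_cpow_neg_le hs.le hx 0
  rw [← integral_neg_mul_I_cpow_neg_mul_Gamma hμ hs hs1 hφ, Complex.re_mul_ofReal,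
    ← integral_mul_const]
  congr 1
  refine Eq.trans (integral_congr_ae ?_) (integral_re hint)
  filter_upwards [hne] with x hx using (re_neg_mul_I_cpow_neg s hx).symm

end NegativeMoments

section StretchedExponential

open Set

variable {μ : Measure ℝ} {s α : ℝ} {w : ℂ}

theorem re_cexp_pos (hw : |w.im| < Real.pi / 2) : 0 < (Complex.exp w).re := by
  rw [Complex.exp_re]
  exact mul_pos (Real.exp_pos _) (Real.cos_pos_of_mem_Ioo (abs_lt.mp hw))

theorem integrableOn_rpow_mul_charFun_of_eq_cexp [IsFiniteMeasure μ] (hs : 0 < s) (hα : 0 < α)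
    (hw : |w.im| < Real.pi / 2)
    (hφ : ∀ k > 0, charFun μ k = Complex.exp (-(Complex.exp w * ((k ^ α : ℝ) : ℂ)))) :
    IntegrableOn (fun k : ℝ => ((k ^ (s - 1) : ℝ) : ℂ) * charFun μ k) (Ioi 0) := by
  refine Integrable.mono' (integrableOn_rpow_mul_exp_neg_mul_rpow (s := s - 1) (by linarith) hα
    (re_cexp_pos hw)) (by fun_prop) ?_
  filter_upwards [ae_restrict_mem measurableSet_Ioi] with k (hk : 0 < k)
  rw [hφ k hk, norm_mul, Complex.norm_real, Real.norm_of_nonneg (Real.rpow_nonneg hk.le _),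
    Complex.norm_exp, Complex.neg_re, Complex.re_mul_ofReal, neg_mul]

theorem integral_abs_rpow_neg_of_charFun_eq_cexp [IsFiniteMeasure μ] (hμ : μ {0} = 0) (hs : 0 < s)
    (hs1 : s < 1) (hα : 0 < α) (hw : |w.im| < Real.pi / 2)
    (hφ : ∀ k > 0, charFun μ k = Complex.exp (-(Complex.exp w * ((k ^ α : ℝ) : ℂ)))) :
    ∫ x, |x| ^ (-s) ∂μ =
      Real.cos (s / α * w.im) / Real.cos (Real.pi / 2 * s) *
        (Real.Gamma (1 + s / α) / Real.Gamma (1 + s)) * Real.exp (-(s / α * w.re)) := by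
  have hcos : 0 < Real.cos (Real.pi / 2 * s) :=
    cos_pi_div_two_mul_pos (by rwa [abs_of_pos hs])
  have hpow : Complex.exp w ^ (-(s / α) : ℂ) = Complex.exp (((-(s / α) : ℝ) : ℂ) * w) := by
    obtain ⟨h₁, h₂⟩ := abs_lt.mp hw
    rw [Complex.cpow_def_of_ne_zero (Complex.exp_ne_zero w),
      Complex.log_exp (by linarith) (by linarith), mul_comm]
    push_cast
    rfl
  have hre : (Complex.exp w ^ (-(s / α) : ℂ)).re =
      Real.exp (-(s / α * w.re)) * Real.cos (s / α * w.im) := by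
    rw [hpow, Complex.exp_re, Complex.re_ofReal_mul, Complex.im_ofReal_mul, neg_mul, neg_mul,
      Real.cos_neg]
  have hmoment : (∫ x, |x| ^ (-s) ∂μ) * Real.cos (Real.pi / 2 * s) * Real.Gamma s =
      α⁻¹ * (Real.exp (-(s / α * w.re)) * Real.cos (s / α * w.im) * Real.Gamma (s / α)) := by
    rw [integral_abs_rpow_neg_mul_cos_mul_Gamma hμ hs hs1
        (integrableOn_rpow_mul_charFun_of_eq_cexp hs hα hw hφ),
      setIntegral_congr_fun measurableSet_Ioi fun k hk => by rw [hφ k hk],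
      integral_rpow_mul_cexp_neg_mul_rpow_Ioi hs hα (re_cexp_pos hw), ← Complex.ofReal_inv,
      Complex.re_ofReal_mul, Complex.re_mul_ofReal, hre]
  rw [add_comm 1, add_comm 1, Real.Gamma_add_one hs.ne', Real.Gamma_add_one (by positivity),
    div_mul_div_comm, div_mul_eq_mul_div, eq_div_iff (by positivity)]
  linear_combination s * hmoment

end StretchedExponential

section StrictlyStable

open Filter Set

variable {Ω : Type*} [MeasureSpace Ω] {X : Ω → ℝ} {ν θ τ : ℝ}

theorem IsStrictlyStable.measurable (hX : IsStrictlyStable X ν θ τ) : Measurable X := hX.1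

theorem IsStrictlyStable.sqrt_pos (hX : IsStrictlyStable X ν θ τ) : 0 < √ν :=
  Real.sqrt_pos.mpr (by linarith [hX.2.1])

theorem IsStrictlyStable.abs_le_one (hX : IsStrictlyStable X ν θ τ) : |θ| ≤ 1 :=
  hX.2.2.1.trans (min_le_left _ _)

theorem IsStrictlyStable.sqrt_eq_one_and_abs_eq_one_of_sqrt_le (hX : IsStrictlyStable X ν θ τ)
    (h : √ν ≤ |θ|) : √ν = 1 ∧ |θ| = 1 := by
  have h₁ := hX.2.2.1.trans (min_le_left _ _)
  have h₂ := hX.2.2.1.trans (min_le_right _ _)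
  constructor <;> linarith

theorem IsStrictlyStable.ae_ne_zero (hX : IsStrictlyStable X ν θ τ) : ∀ᵐ ω, X ω ≠ 0 :=
  measure_eq_zero_iff_ae_notMem.mp hX.2.2.2.1

theorem IsStrictlyStable.integrable_abs_log_pow (hX : IsStrictlyStable X ν θ τ) (n : ℕ) :
    Integrable fun ω => |Real.log (|X ω|)| ^ n :=
  hX.2.2.2.2.1 n

theorem IsStrictlyStable.integrable_log_abs_sub_pow [IsFiniteMeasure (ℙ : Measure Ω)]
    (hX : IsStrictlyStable X ν θ τ) (n : ℕ) :
    Integrable fun ω => (Real.log |X ω| - τ) ^ n := by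
  have hbound : Integrable fun ω => 2 ^ (n - 1) * (|Real.log (|X ω|)| ^ n + |τ| ^ n) :=
    ((hX.integrable_abs_log_pow n).add (integrable_const _)).const_mul _
  have hmeas := hX.measurable
  refine hbound.mono' (Measurable.aestronglyMeasurable (by fun_prop)) (ae_of_all _ fun ω => ?_)
  rw [norm_pow, Real.norm_eq_abs]
  exact (pow_le_pow_left₀ (abs_nonneg _) (abs_sub _ _) n).trans
    (add_pow_le (abs_nonneg _) (abs_nonneg _) n)

theorem IsStrictlyStable.map_singleton_zero (hX : IsStrictlyStable X ν θ τ) :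
    (ℙ : Measure Ω).map X {0} = 0 := by
  rw [Measure.map_apply hX.measurable (measurableSet_singleton 0)]
  exact hX.2.2.2.1

theorem IsStrictlyStable.charFun_map (hX : IsStrictlyStable X ν θ τ) {k : ℝ} (hk : k ≠ 0) :
    charFun ((ℙ : Measure Ω).map X) k =
      Complex.exp (-(Complex.exp (((τ + Real.eulerMascheroniConstant * (1 - √ν)) / √ν : ℝ) -
        (Real.pi / 2 * θ * Real.sign k / √ν : ℝ) * Complex.I) * ((|k| ^ (√ν)⁻¹ : ℝ) : ℂ))) := by
  have hβ : (√ν : ℂ) ≠ 0 := by exact_mod_cast hX.sqrt_pos.ne'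
  have hν : ν ^ (-(1 / 2) : ℝ) = (√ν)⁻¹ := by
    rw [Real.rpow_neg (by linarith [hX.2.1]), ← Real.sqrt_eq_rpow]
  have hφ := hX.2.2.2.2.2 k hk
  have hmeas := hX.measurable
  rw [hν] at hφ
  rw [charFun_apply_real, integral_map (by fun_prop) (by fun_prop),
    Real.rpow_def_of_pos (abs_pos.mpr hk), Complex.ofReal_exp, ← Complex.exp_add]
  simp only [mul_right_comm _ _ Complex.I, mul_comm _ Complex.I] at hφ ⊢
  rw [hφ]
  congr 3
  push_cast
  field_simp
  ring

theorem exp_neg_mul_sign_mul_I_mul_abs {θ k : ℝ} (hθ : |θ| = 1) (hk : k ≠ 0) :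
    Complex.exp (-((Real.pi / 2 * (θ * Real.sign k) : ℝ) * Complex.I)) * (|k| : ℝ) =
      -(θ * k * Complex.I) := by
  have hexp : Complex.exp (-(Real.pi / 2 * Complex.I)) = -Complex.I := by
    rw [Complex.exp_neg, Complex.exp_pi_div_two_mul_I, Complex.inv_I]
  rcases eq_or_eq_neg_of_abs_eq hθ with rfl | rfl <;> rcases hk.lt_or_gt with h | h <;>
    simp [Real.sign_of_neg, Real.sign_of_pos, abs_of_neg, abs_of_pos, h, hexp,
      Complex.exp_pi_div_two_mul_I, mul_comm Complex.I]

-- In this boundary case the characteristic exponent is purely imaginary, so the power integral of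
-- the characteristic function is not absolutely convergent, but `X` is almost surely the constant
-- `θ * exp τ`.
theorem IsStrictlyStable.abs_eq_exp_of_sqrt_le [IsProbabilityMeasure (ℙ : Measure Ω)]
    (hX : IsStrictlyStable X ν θ τ) (h : √ν ≤ |θ|) : ∀ᵐ ω, |X ω| = Real.exp τ := by
  obtain ⟨hβ, hθ⟩ := hX.sqrt_eq_one_and_abs_eq_one_of_sqrt_le h
  have hmeas := hX.measurable.aemeasurable (μ := ℙ)
  have := Measure.isProbabilityMeasure_map hmeas
  have hdirac : (ℙ : Measure Ω).map X = Measure.dirac (θ * Real.exp τ) := by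
    refine Measure.ext_of_charFun (funext fun k => ?_)
    rcases eq_or_ne k 0 with rfl | hk
    · simp
    rw [hX.charFun_map hk, hβ, charFun_dirac]
    simp only [sub_self, mul_zero, add_zero, div_one, inv_one, Real.rpow_one, sub_eq_add_neg,
      Complex.exp_add, mul_assoc, exp_neg_mul_sign_mul_I_mul_abs hθ hk, RCLike.inner_apply]
    congr 1
    rw [conj_trivial]
    push_cast
    ring
  have hX_eq : ∀ᵐ ω, X ω = θ * Real.exp τ :=
    ae_of_ae_map hmeas (p := fun x => x = θ * Real.exp τ) (by rw [hdirac, ae_dirac_eq]; rfl)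
  filter_upwards [hX_eq] with ω hω
  rw [hω, abs_mul, hθ, one_mul, abs_of_pos (Real.exp_pos τ)]

/-- The logarithm of the coefficient of `k ^ (√ν)⁻¹`, for `k > 0`, in the characteristic exponent
of a strictly stable law. -/
noncomputable def stableLogScale (ν θ τ : ℝ) : ℂ :=
  ((τ + Real.eulerMascheroniConstant * (1 - √ν)) / √ν : ℝ) -
    (Real.pi / 2 * θ / √ν : ℝ) * Complex.I

theorem stableLogScale_re (ν θ τ : ℝ) :
    (stableLogScale ν θ τ).re = (τ + Real.eulerMascheroniConstant * (1 - √ν)) / √ν := by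
  rw [stableLogScale, Complex.sub_re, Complex.ofReal_re, Complex.re_ofReal_mul, Complex.I_re,
    mul_zero, sub_zero]

theorem stableLogScale_im (ν θ τ : ℝ) :
    (stableLogScale ν θ τ).im = -(Real.pi / 2 * θ / √ν) := by
  rw [stableLogScale, Complex.sub_im, Complex.ofReal_im, Complex.im_ofReal_mul, Complex.I_im,
    mul_one, zero_sub]

theorem abs_stableLogScale_im_lt (h : |θ| < √ν) :
    |(stableLogScale ν θ τ).im| < Real.pi / 2 := by
  have hβ : 0 < √ν := (abs_nonneg θ).trans_lt h
  rw [stableLogScale_im, abs_neg, abs_div, abs_mul, abs_of_pos hβ, abs_of_pos Real.pi_div_two_pos,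
    div_lt_iff₀ hβ]
  exact mul_lt_mul_of_pos_left h Real.pi_div_two_pos

theorem IsStrictlyStable.charFun_map_of_pos (hX : IsStrictlyStable X ν θ τ) {k : ℝ} (hk : 0 < k) :
    charFun ((ℙ : Measure Ω).map X) k =
      Complex.exp (-(Complex.exp (stableLogScale ν θ τ) * ((k ^ (√ν)⁻¹ : ℝ) : ℂ))) := by
  rw [hX.charFun_map hk.ne', Real.sign_of_pos hk, abs_of_pos hk, mul_one, stableLogScale]

variable {s : ℝ}

theorem IsStrictlyStable.integrable_abs_rpow_neg [IsProbabilityMeasure (ℙ : Measure Ω)]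
    (hX : IsStrictlyStable X ν θ τ) (hs : 0 < s) (hs1 : s < 1) :
    Integrable fun ω => |X ω| ^ (-s) := by
  rcases lt_or_ge |θ| (√ν) with h | h
  · have hφ := integrableOn_rpow_mul_charFun_of_eq_cexp hs (inv_pos.mpr hX.sqrt_pos)
      (abs_stableLogScale_im_lt h) fun _ => hX.charFun_map_of_pos
    exact (integrable_abs_rpow_neg_of_integrableOn_charFun hX.map_singleton_zero hs hs1
      hφ).comp_measurable hX.measurable
  · refine (integrable_const (Real.exp τ ^ (-s))).congr ?_
    filter_upwards [hX.abs_eq_exp_of_sqrt_le h] with ω hω using by rw [hω]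

theorem IsStrictlyStable.integral_abs_rpow_neg [IsProbabilityMeasure (ℙ : Measure Ω)]
    (hX : IsStrictlyStable X ν θ τ) (hs : 0 < s) (hs1 : s < 1) :
    ∫ ω, |X ω| ^ (-s) =
      Real.cos (Real.pi / 2 * θ * s) / Real.cos (Real.pi / 2 * s) *
        (Real.Gamma (1 + √ν * s) / Real.Gamma (1 + s)) *
        Real.exp (-(s * (τ + Real.eulerMascheroniConstant * (1 - √ν)))) := by
  rcases lt_or_ge |θ| (√ν) with h | h
  · have hmoment := integral_abs_rpow_neg_of_charFun_eq_cexp hX.map_singleton_zero hs hs1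
      (inv_pos.mpr hX.sqrt_pos) (abs_stableLogScale_im_lt h) fun _ => hX.charFun_map_of_pos
    have hβ := hX.sqrt_pos.ne'
    have hre : s / (√ν)⁻¹ * (stableLogScale ν θ τ).re =
        s * (τ + Real.eulerMascheroniConstant * (1 - √ν)) := by
      rw [stableLogScale_re]
      field_simp
    have him : s / (√ν)⁻¹ * (stableLogScale ν θ τ).im = -(Real.pi / 2 * θ * s) := by
      rw [stableLogScale_im]
      field_simp
    rw [integral_map hX.measurable.aemeasurable (Measurable.aestronglyMeasurable (by fun_prop)),
      hre, him, Real.cos_neg, div_inv_eq_mul, mul_comm s √ν] at hmoment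
    exact hmoment
  · obtain ⟨hβ, hθ⟩ := hX.sqrt_eq_one_and_abs_eq_one_of_sqrt_le h
    have hcos : 0 < Real.cos (Real.pi / 2 * s) :=
      cos_pi_div_two_mul_pos (by rwa [abs_of_pos hs])
    have hcosθ : Real.cos (Real.pi / 2 * θ * s) = Real.cos (Real.pi / 2 * s) := by
      rcases eq_or_eq_neg_of_abs_eq hθ with rfl | rfl <;> simp
    have hΓ : 0 < Real.Gamma (1 + s) := Real.Gamma_pos_of_pos (by linarith)
    have hconst : (fun ω => |X ω| ^ (-s)) =ᵐ[ℙ] fun _ => Real.exp τ ^ (-s) := by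
      filter_upwards [hX.abs_eq_exp_of_sqrt_le h] with ω hω using by rw [hω]
    rw [integral_congr_ae hconst, integral_const, probReal_univ, one_smul, ← Real.exp_mul, hβ,
      hcosθ, one_mul, div_self hcos.ne', div_self hΓ.ne']
    ring_nf

theorem exp_mul_log_abs_sub_eq {x : ℝ} (hx : x ≠ 0) (t τ : ℝ) :
    Real.exp (t * (Real.log |x| - τ)) = Real.exp (-(t * τ)) * |x| ^ t := by
  rw [Real.rpow_def_of_pos (abs_pos.mpr hx), ← Real.exp_add]
  ring_nf

theorem IsStrictlyStable.Ioo_subset_integrableExpSet [IsProbabilityMeasure (ℙ : Measure Ω)]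
    (hX : IsStrictlyStable X ν θ τ) :
    Ioo (-1) 0 ⊆ integrableExpSet (fun ω => Real.log |X ω| - τ) ℙ := by
  rintro t ⟨h₁, h₀⟩
  have hint := hX.integrable_abs_rpow_neg (s := -t) (by linarith) (by linarith)
  rw [neg_neg] at hint
  refine (hint.const_mul (Real.exp (-(t * τ)))).congr ?_
  filter_upwards [hX.ae_ne_zero] with ω hω using (exp_mul_log_abs_sub_eq hω t τ).symm

/-- The cumulant generating function of `log |X| - τ` for a strictly stable `X` with parameters
`(β ^ 2, θ, τ)`, in closed form. -/
noncomputable def logAbsCGF (β θ t : ℝ) : ℝ :=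
  Real.log (Real.cos (Real.pi / 2 * θ * t)) - Real.log (Real.cos (Real.pi / 2 * t)) +
    (centeredLogGamma (β * t) - centeredLogGamma t)

theorem exp_logAbsCGF {β t : ℝ} (hβ : 0 ≤ β) (hθ : |θ| ≤ 1) (ht : t ∈ Ioo (-1) 0) :
    Real.exp (logAbsCGF β θ t) =
      Real.cos (Real.pi / 2 * θ * t) / Real.cos (Real.pi / 2 * t) *
        (Real.Gamma (1 - β * t) / Real.Gamma (1 - t)) *
        Real.exp (Real.eulerMascheroniConstant * (1 - β) * t) := by
  have hcos (c : ℝ) (hc : |c| ≤ 1) : 0 < Real.cos (Real.pi / 2 * c * t) := by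
    rw [mul_assoc]
    refine cos_pi_div_two_mul_pos ?_
    rw [abs_mul, abs_of_neg ht.2]
    nlinarith [ht.1, ht.2, mul_le_of_le_one_left (neg_nonneg.mpr ht.2.le) hc]
  have hcos₁ : 0 < Real.cos (Real.pi / 2 * t) := by simpa using hcos 1 (by simp)
  have hΓ (c : ℝ) (hc : 0 ≤ c) : 0 < Real.Gamma (1 - c * t) :=
    Real.Gamma_pos_of_pos (by nlinarith [ht.2])
  have hΓ₁ : 0 < Real.Gamma (1 - t) := by simpa using hΓ 1 zero_le_one
  have hsplit : logAbsCGF β θ t =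
      Real.log (Real.cos (Real.pi / 2 * θ * t)) - Real.log (Real.cos (Real.pi / 2 * t)) +
        (Real.log (Real.Gamma (1 - β * t)) - Real.log (Real.Gamma (1 - t))) +
        Real.eulerMascheroniConstant * (1 - β) * t := by
    simp only [logAbsCGF, centeredLogGamma]
    ring
  rw [hsplit, Real.exp_add, Real.exp_add, Real.exp_sub, Real.exp_sub, Real.exp_log (hcos θ hθ),
    Real.exp_log hcos₁, Real.exp_log (hΓ β hβ), Real.exp_log hΓ₁]

theorem IsStrictlyStable.eqOn_mgf [IsProbabilityMeasure (ℙ : Measure Ω)]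
    (hX : IsStrictlyStable X ν θ τ) :
    EqOn (mgf (fun ω => Real.log |X ω| - τ) ℙ) (fun t => Real.exp (logAbsCGF √ν θ t))
      (Ioo (-1) 0) := by
  intro t ht
  have hmoment := hX.integral_abs_rpow_neg (s := -t) (by linarith [ht.2]) (by linarith [ht.1])
  simp only [neg_neg, mul_neg, Real.cos_neg, ← sub_eq_add_neg] at hmoment
  have hmgf : mgf (fun ω => Real.log |X ω| - τ) ℙ t = ∫ ω, Real.exp (-(t * τ)) * |X ω| ^ t := by
    refine integral_congr_ae ?_
    filter_upwards [hX.ae_ne_zero] with ω hω using exp_mul_log_abs_sub_eq hω t τ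
  simp only [hmgf, integral_const_mul, hmoment, exp_logAbsCGF hX.sqrt_pos.le hX.abs_le_one ht]
  rw [mul_left_comm, ← Real.exp_add]
  congr 2
  ring

end StrictlyStable

section Cumulants

theorem contDiffAt_zero_comp_mul_left {f : ℝ → ℝ} {n : WithTop ℕ∞} (hf : ContDiffAt ℝ n f 0)
    (c : ℝ) : ContDiffAt ℝ n (fun t => f (c * t)) 0 :=
  ContDiffAt.comp 0 ((mul_zero c).symm ▸ hf) (contDiffAt_const.mul contDiffAt_id)

theorem contDiffAt_logAbsCGF {n : WithTop ℕ∞} (β θ : ℝ) : ContDiffAt ℝ n (logAbsCGF β θ) 0 := by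
  have hcos := contDiffAt_zero_comp_mul_left (analyticAt_log_cos.contDiffAt (n := n))
  have hΓ := hasFPowerSeriesAt_centeredLogGamma.analyticAt.contDiffAt (n := n)
  exact ((hcos (Real.pi / 2 * θ)).sub (hcos (Real.pi / 2))).add
    ((contDiffAt_zero_comp_mul_left hΓ β).sub hΓ)

theorem logAbsCGF_zero (β θ : ℝ) : logAbsCGF β θ 0 = 0 := by
  simp [logAbsCGF]

theorem iteratedDeriv_logAbsCGF (n : ℕ) (β θ : ℝ) :
    iteratedDeriv n (logAbsCGF β θ) 0 =
      (Real.pi / 2) ^ n * (θ ^ n - 1) * iteratedDeriv n (fun t => Real.log (Real.cos t)) 0 +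
        (β ^ n - 1) * iteratedDeriv n centeredLogGamma 0 := by
  have hcos := analyticAt_log_cos.contDiffAt (n := n)
  have hΓ := hasFPowerSeriesAt_centeredLogGamma.analyticAt.contDiffAt (n := n)
  have hcos' := contDiffAt_zero_comp_mul_left hcos
  have hΓ' := contDiffAt_zero_comp_mul_left hΓ β
  have hscale {f : ℝ → ℝ} (hf : ContDiffAt ℝ n f 0) (c : ℝ) :
      iteratedDeriv n (fun t => f (c * t)) 0 = c ^ n * iteratedDeriv n f 0 := by
    have h := iteratedDeriv_comp_mul_left (x := 0) c (by rwa [mul_zero])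
    rwa [mul_zero] at h
  calc iteratedDeriv n (logAbsCGF β θ) 0 = _ :=
        iteratedDeriv_fun_add ((hcos' (Real.pi / 2 * θ)).sub (hcos' (Real.pi / 2))) (hΓ'.sub hΓ)
    _ = _ := by
        rw [iteratedDeriv_fun_sub (hcos' _) (hcos' _), iteratedDeriv_fun_sub hΓ' hΓ, hscale hcos,
          hscale hcos, hscale hΓ]
        ring

theorem iteratedDeriv_one_logAbsCGF (β θ : ℝ) : iteratedDeriv 1 (logAbsCGF β θ) 0 = 0 := by
  rw [iteratedDeriv_logAbsCGF, iteratedDeriv_one_log_cos, iteratedDeriv_one_centeredLogGamma]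
  ring

theorem iteratedDeriv_two_logAbsCGF (β θ : ℝ) :
    iteratedDeriv 2 (logAbsCGF β θ) 0 =
      Real.pi ^ 2 / 4 * (1 - θ ^ 2) + Real.pi ^ 2 / 6 * (β ^ 2 - 1) := by
  rw [iteratedDeriv_logAbsCGF, iteratedDeriv_two_log_cos, iteratedDeriv_centeredLogGamma]
  push_cast [Nat.factorial, zetaR_two]
  ring

theorem iteratedDeriv_three_logAbsCGF (β θ : ℝ) :
    iteratedDeriv 3 (logAbsCGF β θ) 0 = 2 * zetaR 3 * (β ^ 3 - 1) := by
  rw [iteratedDeriv_logAbsCGF, iteratedDeriv_three_log_cos, iteratedDeriv_centeredLogGamma]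
  push_cast [Nat.factorial]
  ring

theorem iteratedDeriv_four_logAbsCGF (β θ : ℝ) :
    iteratedDeriv 4 (logAbsCGF β θ) 0 =
      Real.pi ^ 4 * ((1 - θ ^ 4) / 8 + (β ^ 4 - 1) / 15) := by
  rw [iteratedDeriv_logAbsCGF, iteratedDeriv_four_log_cos, iteratedDeriv_centeredLogGamma]
  push_cast [Nat.factorial, zetaR_four]
  ring

theorem iteratedDeriv_five_logAbsCGF (β θ : ℝ) :
    iteratedDeriv 5 (logAbsCGF β θ) 0 = 24 * zetaR 5 * (β ^ 5 - 1) := by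
  rw [iteratedDeriv_logAbsCGF, iteratedDeriv_five_log_cos, iteratedDeriv_centeredLogGamma]
  push_cast [Nat.factorial]
  ring

theorem IsStrictlyStable.integral_log_abs_sub_pow {Ω : Type*} [MeasureSpace Ω]
    [IsProbabilityMeasure (ℙ : Measure Ω)] {X : Ω → ℝ} {ν θ τ : ℝ}
    (hX : IsStrictlyStable X ν θ τ) (n : ℕ) :
    ∫ ω, (Real.log |X ω| - τ) ^ n = iteratedDeriv n (fun t => Real.exp (logAbsCGF √ν θ t)) 0 :=
  integral_pow_eq_iteratedDeriv_of_mgf_eqOn neg_one_lt_zero hX.Ioo_subset_integrableExpSet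
    (hX.integrable_log_abs_sub_pow n) (contDiffAt_logAbsCGF _ _).exp hX.eqOn_mgf

end Cumulants

theorem central_log_moments_three_four_five {Ω : Type*} [MeasureSpace Ω]
    [IsProbabilityMeasure (ℙ : Measure Ω)] (X : Ω → ℝ) (ν θ τ : ℝ)
    (hX : IsStrictlyStable X ν θ τ)
    (DV : ℝ) (hDV : DV = Real.pi ^ 2 / 4 * (1 - θ ^ 2) + Real.pi ^ 2 / 6 * (ν - 1)) :
    (∫ ω, (Real.log |X ω| - τ) ^ 3) = 2 * zetaR 3 * (ν ^ ((3 : ℝ) / 2) - 1) ∧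
    (∫ ω, (Real.log |X ω| - τ) ^ 4) =
      Real.pi ^ 4 * ((1 - θ ^ 4) / 8 + (ν ^ 2 - 1) / 15) + 3 * DV ^ 2 ∧
    (∫ ω, (Real.log |X ω| - τ) ^ 5) =
      20 * zetaR 3 * (ν ^ ((3 : ℝ) / 2) - 1) * DV + 24 * zetaR 5 * (ν ^ ((5 : ℝ) / 2) - 1) := by
  have hν : 0 ≤ ν := (Real.sqrt_pos.mp hX.sqrt_pos).le
  have hK {n : WithTop ℕ∞} := contDiffAt_logAbsCGF (n := n) √ν θ
  have hK₀ := logAbsCGF_zero √ν θ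
  have hK₁ := iteratedDeriv_one_logAbsCGF √ν θ
  have hpow (n : ℕ) : ν ^ ((n : ℝ) / 2) = √ν ^ n := by
    rw [Real.sqrt_eq_rpow, ← Real.rpow_mul_natCast hν, one_div_mul_eq_div]
  have hpow₃ : ν ^ ((3 : ℝ) / 2) = √ν ^ 3 := hpow 3
  have hpow₅ : ν ^ ((5 : ℝ) / 2) = √ν ^ 5 := hpow 5
  have hν₂ : ν ^ 2 = √ν ^ 4 := by rw [← hpow]; norm_num
  have hDV' : DV = iteratedDeriv 2 (logAbsCGF √ν θ) 0 := by
    rw [hDV, iteratedDeriv_two_logAbsCGF, Real.sq_sqrt hν]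
  refine ⟨?_, ?_, ?_⟩
  · rw [hX.integral_log_abs_sub_pow, iteratedDeriv_three_exp_comp hK hK₀ hK₁,
      iteratedDeriv_three_logAbsCGF, hpow₃]
  · rw [hX.integral_log_abs_sub_pow, iteratedDeriv_four_exp_comp hK hK₀ hK₁,
      iteratedDeriv_four_logAbsCGF, hDV', hν₂]
  · rw [hX.integral_log_abs_sub_pow, iteratedDeriv_five_exp_comp hK hK₀ hK₁,
      iteratedDeriv_three_logAbsCGF, iteratedDeriv_five_logAbsCGF, hDV', hpow₃, hpow₅]
    ring
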